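/- Let X = ⊔_n X_n and Y = ⊔_n Y_n be coarse disjoint unions of expander graphs and let f : X → Y be a coarse equivalence. Then the following are equivalent: (1) f is close to a bijective coarse equivalence; (2) there are cofinite subsets N, M of ℕ and a bijection i : N → M such that Σ_{n∈ℕ∖N} |X_n| = Σ_{n∈ℕ∖M} |Y_n|, and for all n ∈ N one has |X_n| = |Y_{i(n)}| and f(X_n) ⊆ Y_{i(n)}. -/

import Mathlib

/-!
A bijective coarse equivalence `g` close to `f`, and its inverse, are coarse, so each of them
maps every connected piece of large index into a single piece (`exists_piece_image`). Hence `g`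
maps all but finitely many `Xn n` onto some `Yn (i n)`, which also contains `f (Xn n)` because
distinct pieces are far apart. The remaining points form two finite sets which `g` identifies;
this is the equality of sums (`pieces_of_bijective`).

Conversely, on all but finitely many matched pieces `f : Xn n → Yn (i n)` has a coarse inverse
`g : Yn (i n) → Xn n`, both have uniformly bounded fibres because degrees are bounded
(`ncard_le_mul_ncard_image`), and neighbourhoods in `Yn (i n)` grow geometrically until they
fill half of it (`expander_growth`). Enlarging `f(A)` by a fixed radius therefore either gives
at least `|A|` points or fills more than half of `Yn (i n)`; in the second case the same growth
applied to the complement, pulled back by `g`, bounds the complement of a larger neighbourhood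
by `|Xn n \ A|`. Since the pieces have equal size, this is Hall's condition
(`hall_condition`), and Hall's theorem gives bijections `Xn n → Yn (i n)` uniformly close to
`f`. On the remaining finite part any bijection will do (`bijective_of_pieces`).
-/


open Metric Set

noncomputable section

/-- A map between metric spaces is *coarse* if for every `r > 0` there is `s > 0` such that
points at distance `< r` are mapped to points at distance `< s`. -/
def CoarseMap {X Y : Type*} [MetricSpace X] [MetricSpace Y] (f : X → Y) : Prop :=
  ∀ r : ℝ, 0 < r → ∃ s : ℝ, 0 < s ∧ ∀ x z : X, dist x z < r → dist (f x) (f z) < s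

/-- Two maps into a metric space are *close* if they are at uniformly bounded distance. -/
def CloseMaps {X Y : Type*} [MetricSpace Y] (f g : X → Y) : Prop :=
  ∃ C : ℝ, ∀ x : X, dist (f x) (g x) ≤ C

/-- A coarse map is a *coarse equivalence* if it has a coarse inverse up to closeness. -/
def CoarseEquivMap {X Y : Type*} [MetricSpace X] [MetricSpace Y] (f : X → Y) : Prop :=
  CoarseMap f ∧ ∃ g : Y → X, CoarseMap g ∧ CloseMaps (g ∘ f) id ∧ CloseMaps (f ∘ g) id

/-- Two metric spaces are *bijectively coarsely equivalent* if there is a bijective coarse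
equivalence between them. -/
def BijCoarseEquiv (X Y : Type*) [MetricSpace X] [MetricSpace Y] : Prop :=
  ∃ f : X → Y, Function.Bijective f ∧ CoarseEquivMap f

/-- A metric space is *uniformly locally finite* if there is a uniform bound on the
cardinality of balls of any fixed radius. -/
def IsULFSpace (X : Type*) [MetricSpace X] : Prop :=
  ∀ r : ℝ, 0 < r → ∃ N : ℕ, ∀ x : X,
    (Metric.closedBall x r).Finite ∧ (Metric.closedBall x r).ncard ≤ N

/-- A map is *uniformly finite-to-one* if preimages of singletons have uniformly bounded size. -/
def UnifFiniteToOne {X Y : Type*} (f : X → Y) : Prop :=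
  ∃ m : ℕ, ∀ y : Y, (f ⁻¹' {y}).Finite ∧ (f ⁻¹' {y}).ncard ≤ m

/-- A u.l.f. metric space is *non-amenable* if for every `C > 1` there is `r > 0` such that
`|N_r(S)| ≥ C |S|` for every finite `S`. -/
def NonAmenableSpace (X : Type*) [MetricSpace X] : Prop :=
  ∀ C : ℝ, 1 < C → ∃ r : ℝ, 0 < r ∧ ∀ S : Set X, S.Finite →
    C * (S.ncard : ℝ) ≤ (({x : X | ∃ s ∈ S, dist x s ≤ r}).ncard : ℝ)

/-- The outer `r`-boundary of a set `A`: points outside `A` at distance at most `r` from `A`. -/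
def outerBdry {X : Type*} [MetricSpace X] (r : ℝ) (A : Set X) : Set X :=
  {x : X | x ∉ A ∧ ∃ a ∈ A, dist x a ≤ r}

/-- `Xn` is a partition of the ambient space into finite pieces whose mutual distances tend
to infinity: a *coarse disjoint union*. -/
def IsCDU {X : Type*} [MetricSpace X] (Xn : ℕ → Set X) : Prop :=
  (∀ x : X, ∃! n : ℕ, x ∈ Xn n) ∧ (∀ n : ℕ, (Xn n).Finite) ∧
  ∀ R : ℝ, ∃ k : ℕ, ∀ m n : ℕ, m ≠ n → k ≤ m + n →
    ∀ x ∈ Xn m, ∀ y ∈ Xn n, R ≤ dist x y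

/-- A subset is `t`-connected if any two of its points are joined by a chain in the subset
with consecutive distances at most `t`. -/
def TConnSubset {X : Type*} [MetricSpace X] (t : ℝ) (S : Set X) : Prop :=
  ∀ x ∈ S, ∀ y ∈ S, ∃ (m : ℕ) (c : ℕ → X), c 0 = x ∧ c m = y ∧
    (∀ i : ℕ, i ≤ m → c i ∈ S) ∧ ∀ i : ℕ, i < m → dist (c i) (c (i + 1)) ≤ t

/-- The metric restricted to `S` is the shortest path metric of the graph on `S` whose edges
are the pairs at distance `1`: any two points of `S` are joined by a chain of unit-distance
steps in `S` whose length realizes their distance. -/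
def GraphMetricOn {X : Type*} [MetricSpace X] (S : Set X) : Prop :=
  ∀ x ∈ S, ∀ y ∈ S, ∃ (m : ℕ) (c : ℕ → X), dist x y = (m : ℝ) ∧ c 0 = x ∧ c m = y ∧
    (∀ i : ℕ, i ≤ m → c i ∈ S) ∧ ∀ i : ℕ, i < m → dist (c i) (c (i + 1)) = 1

/-- `S` is a `(k,h)`-expander graph (with its shortest path metric): vertex degrees are at
most `k` and `|∂ A| ≥ h (1 - |A|/|S|) |A|` for every `A ⊆ S`. -/
def ExpanderGraphSet {X : Type*} [MetricSpace X] (k : ℕ) (h : ℝ) (S : Set X) : Prop :=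
  GraphMetricOn S ∧
  (∀ x ∈ S, ({z : X | z ∈ S ∧ z ≠ x ∧ dist z x ≤ 1}).ncard ≤ k) ∧
  ∀ A : Set X, A ⊆ S →
    h * (1 - (A.ncard : ℝ) / (S.ncard : ℝ)) * (A.ncard : ℝ) ≤ ((outerBdry 1 A ∩ S).ncard : ℝ)

/-- `Xn` is a sequence of expander graphs: all are `(k,h)`-expanders for fixed `k, h` and
their cardinalities tend to infinity. -/
def ExpanderSeq {X : Type*} [MetricSpace X] (Xn : ℕ → Set X) : Prop :=
  ∃ (k : ℕ) (h : ℝ), 0 < h ∧ (∀ n : ℕ, ExpanderGraphSet k h (Xn n)) ∧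
    Filter.Tendsto (fun n => (Xn n).ncard) Filter.atTop Filter.atTop

/-- `a : X → ℤ` is a boundary in uniformly finite homology: `a x = ∑_z (b x z - b z x)` for a
bounded `b` supported at bounded distance from the diagonal. -/
def UFBoundary {X : Type*} [MetricSpace X] (a : X → ℤ) : Prop :=
  ∃ (b : X → X → ℤ) (K : ℤ) (r : ℝ),
    (∀ x z : X, |b x z| ≤ K) ∧ (∀ x z : X, b x z ≠ 0 → dist x z ≤ r) ∧
    ∀ x : X, a x = ∑ᶠ z : X, (b x z - b z x)

/-! ### Counting in expander graphs -/

/-- The vertices of `S` at distance at most `r` from `B`. -/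
def nbhdIn {X : Type*} [MetricSpace X] (S : Set X) (r : ℝ) (B : Set X) : Set X :=
  {y : X | y ∈ S ∧ ∃ b ∈ B, dist y b ≤ r}

lemma nbhdIn_subset {X : Type*} [MetricSpace X] (S : Set X) (r : ℝ) (B : Set X) :
    nbhdIn S r B ⊆ S := fun _ h => h.1

lemma GraphMetricOn.exists_pred {X : Type*} [MetricSpace X] {S : Set X} (hS : GraphMetricOn S)
    {x y : X} (hx : x ∈ S) (hy : y ∈ S) (hxy : x ≠ y) :
    ∃ z ∈ S, dist x z ≤ dist x y - 1 ∧ dist z y = 1 := by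
  obtain ⟨m, c, hd, h0, hm, hcS, hc⟩ := hS x hx y hy
  have hmpos : m ≠ 0 := by
    rintro rfl
    exact hxy (h0.symm.trans hm)
  obtain ⟨j, rfl⟩ := Nat.exists_eq_succ_of_ne_zero hmpos
  refine ⟨c j, hcS j (by omega), ?_, ?_⟩
  · have h1 := dist_le_range_sum_dist c j
    have h2 : ∑ i ∈ Finset.range j, dist (c i) (c (i + 1)) = j := by
      rw [Finset.sum_congr rfl (fun i hi => hc i (by have := Finset.mem_range.1 hi; omega))]
      simp
    rw [h2, h0] at h1
    rw [hd]
    push_cast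
    linarith
  · rw [← hm]
    exact hc j (by omega)

/-- Balls of a given radius in a graph of bounded degree have bounded size. -/
lemma ball_ncard_le {X : Type*} [MetricSpace X] {S : Set X} (hfin : S.Finite)
    (hS : GraphMetricOn S) (k : ℕ)
    (hk : ∀ x ∈ S, ({z : X | z ∈ S ∧ z ≠ x ∧ dist z x ≤ 1}).ncard ≤ k) (j : ℕ) :
    ∀ x ∈ S, ({z : X | z ∈ S ∧ dist x z ≤ j}).ncard ≤ (k + 1) ^ j := by
  classical
  intro x hx
  induction j with
  | zero =>
    have : {z : X | z ∈ S ∧ dist x z ≤ (0 : ℕ)} ⊆ {x} := by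
      rintro z ⟨-, hz⟩
      have : dist x z = 0 := le_antisymm (by simpa using hz) dist_nonneg
      exact (dist_eq_zero.1 this).symm
    simpa using Set.ncard_le_ncard this
  | succ j ih =>
    have hBf : ∀ i : ℕ, ({z : X | z ∈ S ∧ dist x z ≤ i}).Finite :=
      fun i => hfin.subset fun _ h => h.1
    have hNf : ∀ z : X, ({w : X | w ∈ S ∧ w ≠ z ∧ dist w z ≤ 1}).Finite :=
      fun z => hfin.subset fun _ h => h.1
    set P := (hBf j).toFinset with hP
    let T : X → Finset X := fun z => insert z (hNf z).toFinset
    have hsub : {z : X | z ∈ S ∧ dist x z ≤ ((j + 1 : ℕ) : ℝ)} ⊆ ↑(P.biUnion T) := by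
      rintro y ⟨hy, hxy⟩
      rw [Finset.mem_coe, Finset.mem_biUnion]
      by_cases hne : x = y
      · subst hne
        exact ⟨x, by simp [hP, hx], by simp [T]⟩
      · obtain ⟨z, hz, h1, h2⟩ := hS.exists_pred hx hy hne
        refine ⟨z, ?_, ?_⟩
        · simp only [hP, Set.Finite.mem_toFinset, Set.mem_ofPred_eq]
          refine ⟨hz, ?_⟩
          push_cast at hxy
          linarith
        · simp only [T, Finset.mem_insert, Set.Finite.mem_toFinset, Set.mem_ofPred_eq]
          right
          refine ⟨hy, ?_, ?_⟩
          · rintro rfl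
            simp at h2
          · rw [dist_comm, h2]
    have h1 := Set.ncard_le_ncard hsub (Finset.finite_toSet _)
    rw [Set.ncard_coe_finset] at h1
    have h2 : (P.biUnion T).card ≤ P.card * (k + 1) := by
      apply Finset.card_biUnion_le_card_mul
      intro z hz
      have hzS : z ∈ S := by
        have : z ∈ S ∧ dist x z ≤ j := by simpa [hP] using hz
        exact this.1
      refine (Finset.card_insert_le _ _).trans ?_
      have := hk z hzS
      rw [Set.ncard_eq_toFinset_card _ (hNf z)] at this
      omega
    rw [Set.ncard_eq_toFinset_card _ (hBf j)] at ih
    calc _ ≤ _ := h1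
      _ ≤ _ := h2
      _ ≤ (k + 1) ^ j * (k + 1) := Nat.mul_le_mul_right _ ih
      _ = _ := (pow_succ _ _).symm

/-- A map whose fibres in `A` have diameter at most `j`, with `A` inside a graph of bounded
degree, shrinks cardinalities by at most a bounded factor. -/
lemma ncard_le_mul_ncard_image {X Y : Type*} [MetricSpace X] {S : Set X} (hfin : S.Finite)
    (hS : GraphMetricOn S) (k : ℕ)
    (hk : ∀ x ∈ S, ({z : X | z ∈ S ∧ z ≠ x ∧ dist z x ≤ 1}).ncard ≤ k) (j : ℕ)
    (f : X → Y) (hf : ∀ x z, f x = f z → dist x z ≤ j) (A : Set X) (hA : A ⊆ S) :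
    A.ncard ≤ (k + 1) ^ j * (f '' A).ncard := by
  classical
  have hAf := hfin.subset hA
  obtain ⟨A', rfl⟩ := hAf.exists_finset_coe
  rw [← Finset.coe_image, Set.ncard_coe_finset, Set.ncard_coe_finset]
  apply Finset.card_le_mul_card_image
  intro b hb
  obtain ⟨x, hx, rfl⟩ := Finset.mem_image.1 hb
  refine le_trans ?_ (ball_ncard_le hfin hS k hk j x (hA hx))
  rw [← Set.ncard_coe_finset]
  refine Set.ncard_le_ncard ?_ (hfin.subset fun _ h => h.1)
  intro z hz
  simp only [Finset.coe_filter, Set.mem_ofPred_eq] at hz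
  exact ⟨hA hz.1, hf x z hz.2.symm⟩

/-- Iterating the expander inequality: neighbourhoods grow geometrically until they fill more
than half of the graph. -/
lemma expander_growth {X : Type*} [MetricSpace X] {S : Set X} (hfin : S.Finite)
    {k : ℕ} {h : ℝ} (hh : 0 < h) (hS : ExpanderGraphSet k h S) (B : Set X) (hB : B ⊆ S) (j : ℕ) :
    S.ncard < 2 * (nbhdIn S j B).ncard ∨
      (1 + h / 2) ^ j * (B.ncard : ℝ) ≤ ((nbhdIn S j B).ncard : ℝ) := by
  induction j with
  | zero =>
    right
    have : B ⊆ nbhdIn S (0 : ℕ) B := fun b hb => ⟨hB hb, b, hb, by simp⟩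
    have := Set.ncard_le_ncard this (hfin.subset (nbhdIn_subset _ _ _))
    simpa using this
  | succ j ih =>
    set A := nbhdIn S j B with hAdef
    have hAS : A ⊆ S := nbhdIn_subset _ _ _
    have hAf : A.Finite := hfin.subset hAS
    have hsub : A ∪ (outerBdry 1 A ∩ S) ⊆ nbhdIn S ((j + 1 : ℕ) : ℝ) B := by
      rintro y (⟨hy, b, hb, hd⟩ | ⟨⟨-, a, ⟨-, b, hb, hd⟩, hya⟩, hy⟩)
      · refine ⟨hy, b, hb, ?_⟩
        push_cast
        linarith
      · refine ⟨hy, b, hb, ?_⟩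
        have := dist_triangle y a b
        push_cast
        linarith
    have hcard := Set.ncard_le_ncard hsub (hfin.subset (nbhdIn_subset _ _ _))
    have hbf : (outerBdry 1 A ∩ S).Finite := hfin.subset Set.inter_subset_right
    rw [Set.ncard_union_eq (Set.disjoint_left.2 fun y hy hy' => hy'.1.1 hy) hAf hbf] at hcard
    by_cases hbig : S.ncard < 2 * A.ncard
    · left
      omega
    · right
      have ih' := ih.resolve_left hbig
      have hexp := hS.2.2 A hAS
      have hhalf : (A.ncard : ℝ) / S.ncard ≤ 1 / 2 := by
        have hle : (2 : ℝ) * A.ncard ≤ S.ncard := by exact_mod_cast not_lt.1 hbig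
        apply div_le_of_le_mul₀ (by positivity) (by norm_num)
        linarith
      have hA0 : (0 : ℝ) ≤ A.ncard := by positivity
      have h1 : h / 2 * (A.ncard : ℝ) ≤ ((outerBdry 1 A ∩ S).ncard : ℝ) := by
        refine le_trans ?_ hexp
        apply mul_le_mul_of_nonneg_right _ hA0
        nlinarith
      have hcard' : (A.ncard : ℝ) + ((outerBdry 1 A ∩ S).ncard : ℝ) ≤
          ((nbhdIn S ((j + 1 : ℕ) : ℝ) B).ncard : ℝ) := by exact_mod_cast hcard
      have h2 : (1 + h / 2) * ((1 + h / 2) ^ j * (B.ncard : ℝ)) ≤ (1 + h / 2) * A.ncard :=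
        mul_le_mul_of_nonneg_left ih' (by positivity)
      rw [pow_succ']
      linarith

/-- For every factor `m` there is a radius, as large as desired, that multiplies cardinalities
by `m` in every `(k,h)`-expander, up to half of the graph. -/
lemma exists_growth_radius {X : Type*} [MetricSpace X] (k : ℕ) {h : ℝ} (hh : 0 < h) (m : ℕ)
    (c : ℝ) : ∃ R : ℝ, c ≤ R ∧ ∀ S : Set X, S.Finite → ExpanderGraphSet k h S → ∀ B ⊆ S,
      S.ncard < 2 * (nbhdIn S R B).ncard ∨ m * B.ncard ≤ (nbhdIn S R B).ncard := by
  have h1 : Filter.Tendsto (fun j : ℕ => (1 + h / 2) ^ j) Filter.atTop Filter.atTop :=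
    tendsto_pow_atTop_atTop_of_one_lt (by linarith)
  obtain ⟨j, hj1, hj2⟩ := ((h1.eventually_ge_atTop (m : ℝ)).and
    (tendsto_natCast_atTop_atTop.eventually_ge_atTop c)).exists
  refine ⟨j, hj2, fun S hfin hS B hB => ?_⟩
  refine (expander_growth hfin hh hS B hB j).imp id fun hle => ?_
  have : (m : ℝ) * B.ncard ≤ (nbhdIn S j B).ncard :=
    (mul_le_mul_of_nonneg_right hj1 (by positivity)).trans hle
  exact_mod_cast this

/-! ### The matching inside one piece -/

/-- Hall's condition for matching `x ∈ S` with the points of `T` near `f x`. If the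
`R₀`-neighbourhood of `f(A)` does not already have `|A|` elements, then it fills more than half
of `T`; so the `R₁`-neighbourhood of the complement `C` of the `(R₀ + R₁)`-neighbourhood fills
less than half, hence is much larger than `C`, while `g` maps it into `S \ A` with small
fibres. Thus `|C| ≤ |S \ A|`. -/
lemma hall_condition {X Y : Type*} [MetricSpace X] [MetricSpace Y] {S : Set X} {T : Set Y}
    (hS : S.Finite) (hT : T.Finite) (hcard : S.ncard = T.ncard) (f : X → Y) (g : Y → X)
    (hfST : ∀ x ∈ S, f x ∈ T) (hgTS : ∀ y ∈ T, g y ∈ S) {R₀ R₁ : ℝ}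
    (hR₁ : 0 ≤ R₁) (hfg : ∀ y, dist (f (g y)) y ≤ R₀) {m m' : ℕ} (hm' : 0 < m')
    (hm : ∀ A ⊆ S, A.ncard ≤ m * (f '' A).ncard)
    (hgm : ∀ D ⊆ T, D.ncard ≤ m' * (g '' D).ncard)
    (h0 : ∀ B ⊆ T, T.ncard < 2 * (nbhdIn T R₀ B).ncard ∨ m * B.ncard ≤ (nbhdIn T R₀ B).ncard)
    (h1 : ∀ B ⊆ T, T.ncard < 2 * (nbhdIn T R₁ B).ncard ∨ m' * B.ncard ≤ (nbhdIn T R₁ B).ncard)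
    (A : Set X) (hA : A ⊆ S) : A.ncard ≤ (nbhdIn T (R₀ + R₁) (f '' A)).ncard := by
  have hfA : f '' A ⊆ T := by
    rintro _ ⟨x, hx, rfl⟩
    exact hfST x (hA hx)
  have hsubN : nbhdIn T R₀ (f '' A) ⊆ nbhdIn T (R₀ + R₁) (f '' A) := by
    rintro y ⟨hy, b, hb, hd⟩
    exact ⟨hy, b, hb, by linarith⟩
  have hNf : ∀ r B, (nbhdIn T r B).Finite := fun r B => hT.subset (nbhdIn_subset _ _ _)
  rcases h0 _ hfA with hbig | hle
  swap
  · exact (hm A hA).trans (hle.trans (Set.ncard_le_ncard hsubN (hNf _ _)))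
  set N := nbhdIn T (R₀ + R₁) (f '' A) with hN
  set C := T \ N with hC
  set D := nbhdIn T R₁ C with hD
  have hDN : Disjoint D (nbhdIn T R₀ (f '' A)) := by
    rw [Set.disjoint_left]
    rintro y ⟨-, c, ⟨hcT, hcN⟩, hd⟩ ⟨-, b, hb, hd'⟩
    refine hcN ⟨hcT, b, hb, ?_⟩
    have := dist_triangle c y b
    rw [dist_comm c y] at this
    linarith
  have hDT : D ⊆ T := nbhdIn_subset _ _ _
  have hsum : D.ncard + (nbhdIn T R₀ (f '' A)).ncard ≤ T.ncard := by
    rw [← Set.ncard_union_eq hDN (hNf _ _) (hNf _ _)]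
    exact Set.ncard_le_ncard (Set.union_subset hDT (nbhdIn_subset _ _ _)) hT
  have hCD : m' * C.ncard ≤ D.ncard := (h1 C Set.sdiff_subset).resolve_left (by rw [← hD]; omega)
  have hgD : g '' D ⊆ S \ A := by
    rintro _ ⟨y, hy, rfl⟩
    refine ⟨hgTS y (hDT hy), fun hyA => ?_⟩
    refine Set.disjoint_left.1 hDN hy ⟨hDT hy, f (g y), ⟨g y, hyA, rfl⟩, ?_⟩
    rw [dist_comm]
    exact hfg y
  have h2 : m' * C.ncard ≤ m' * (S \ A).ncard :=
    hCD.trans ((hgm D hDT).trans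
      (Nat.mul_le_mul_left _ (Set.ncard_le_ncard hgD (hS.subset Set.sdiff_subset))))
  have h3 : C.ncard ≤ (S \ A).ncard := Nat.le_of_mul_le_mul_left h2 hm'
  have h4 := Set.ncard_sdiff_add_ncard_of_subset hA hS
  have h5 := Set.ncard_sdiff_add_ncard_of_subset (nbhdIn_subset T (R₀ + R₁) (f '' A)) hT
  rw [← hN, ← hC] at h5
  omega

/-- Hall's marriage theorem turns the counting condition into a bijection close to `f`. -/
lemma exists_bijOn_of_hall {X Y : Type*} [MetricSpace X] [MetricSpace Y] {S : Set X} {T : Set Y}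
    (hT : T.Finite) (hcard : S.ncard = T.ncard) (f : X → Y) (R : ℝ)
    (hall : ∀ A ⊆ S, A.ncard ≤ (nbhdIn T R (f '' A)).ncard) :
    ∃ e : X → Y, Set.BijOn e S T ∧ ∀ x ∈ S, dist (f x) (e x) ≤ R := by
  classical
  have hNf : ∀ B, (nbhdIn T R B).Finite := fun B => hT.subset (nbhdIn_subset _ _ _)
  let t : S → Finset Y := fun x => (hNf {f x}).toFinset
  have ht : ∀ s : Finset S, s.card ≤ (s.biUnion t).card := by
    intro s
    have h1 := hall (Subtype.val '' (s : Set S)) (by rintro _ ⟨x, -, rfl⟩; exact x.2)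
    rw [Set.ncard_image_of_injective _ Subtype.val_injective, Set.ncard_coe_finset] at h1
    refine h1.trans ?_
    rw [← Set.ncard_coe_finset]
    refine Set.ncard_le_ncard ?_ (Finset.finite_toSet _)
    rintro y ⟨hy, _, ⟨_, ⟨x, hx, rfl⟩, rfl⟩, hd⟩
    simp only [Finset.coe_biUnion, Set.mem_iUnion]
    exact ⟨x, hx, by simpa [t, nbhdIn] using ⟨hy, hd⟩⟩
  obtain ⟨e, he, het⟩ := (Finset.all_card_le_biUnion_card_iff_exists_injective t).1 ht
  have het' : ∀ x : S, e x ∈ T ∧ dist (e x) (f x) ≤ R := fun x => by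
    simpa [t, nbhdIn] using het x
  let E : X → Y := fun x => if h : x ∈ S then e ⟨x, h⟩ else f x
  have hE : ∀ x (h : x ∈ S), E x = e ⟨x, h⟩ := fun x h => dif_pos h
  have hmaps : Set.MapsTo E S T := fun x hx => by
    rw [hE x hx]
    exact (het' _).1
  have hinj : Set.InjOn E S := by
    intro x hx z hz hxz
    rw [hE x hx, hE z hz] at hxz
    simpa using he hxz
  refine ⟨E, ⟨hmaps, hinj, ?_⟩, fun x hx => ?_⟩
  · have : E '' S = T := by
      apply Set.eq_of_subset_of_ncard_le hmaps.image_subset _ hT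
      rw [hinj.ncard_image, hcard]
    exact this.ge
  · rw [hE x hx, dist_comm]
    exact (het' _).2

/-! ### Coarse disjoint unions -/

lemma IsCDU.index_unique {X : Type*} [MetricSpace X] {Xn : ℕ → Set X} (hX : IsCDU Xn)
    {x : X} {m n : ℕ} (hm : x ∈ Xn m) (hn : x ∈ Xn n) : m = n :=
  (hX.1 x).unique hm hn

/-- Points of pieces of large index are far from all other pieces. -/
lemma IsCDU.exists_sep {X : Type*} [MetricSpace X] {Xn : ℕ → Set X} (hX : IsCDU Xn) (R : ℝ) :
    ∃ k : ℕ, ∀ m n : ℕ, k ≤ m → ∀ x ∈ Xn m, ∀ y ∈ Xn n, dist x y < R → m = n := by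
  obtain ⟨k, hk⟩ := hX.2.2 R
  refine ⟨k, fun m n hm x hx y hy hd => ?_⟩
  by_contra hne
  exact absurd (hk m n hne (by omega) x hx y hy) (not_le.2 hd)

lemma IsCDU.ncard_biUnion {X : Type*} [MetricSpace X] {Xn : ℕ → Set X} (hX : IsCDU Xn)
    {F : Set ℕ} (hF : F.Finite) :
    (⋃ n ∈ F, Xn n).ncard = ∑ᶠ n ∈ F, (Xn n).ncard := by
  classical
  rw [finsum_mem_eq_finite_toFinset_sum _ hF]
  have h1 : (⋃ n ∈ F, Xn n) = ↑(hF.toFinset.biUnion fun n => (hX.2.1 n).toFinset) := by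
    ext x
    simp
  rw [h1, Set.ncard_coe_finset, Finset.card_biUnion]
  · exact Finset.sum_congr rfl fun n _ => (Set.ncard_eq_toFinset_card _ (hX.2.1 n)).symm
  · intro m _ n _ hmn
    rw [Function.onFun, Finset.disjoint_left]
    intro x hx hx'
    exact hmn (hX.index_unique (by simpa using hx) (by simpa using hx'))

/-- A finite set of points meets only pieces of bounded index. -/
lemma IsCDU.exists_index_bound {X : Type*} [MetricSpace X] {Xn : ℕ → Set X} (hX : IsCDU Xn)
    {P : Set X} (hP : P.Finite) : ∃ K : ℕ, ∀ n, ∀ x ∈ Xn n, x ∈ P → n < K := by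
  choose idx hidx using fun x => (hX.1 x).exists
  obtain ⟨K, hK⟩ := (hP.image idx).bddAbove
  refine ⟨K + 1, fun n x hx hxP => ?_⟩
  rw [hX.index_unique hx (hidx x)]
  exact Nat.lt_succ_of_le (hK ⟨x, hxP, rfl⟩)

lemma IsCDU.finite_biUnion_lt {X : Type*} [MetricSpace X] {Xn : ℕ → Set X} (hX : IsCDU Xn)
    (K : ℕ) : (⋃ n ∈ Set.Iio K, Xn n).Finite :=
  (Set.finite_Iio K).biUnion fun n _ => hX.2.1 n

/-- An injective coarse map sends each connected piece of large index into a single piece,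
itself of large index. -/
lemma exists_piece_image {X Y : Type*} [MetricSpace X] [MetricSpace Y]
    {Xn : ℕ → Set X} {Yn : ℕ → Set Y} (hX : IsCDU Xn) (hY : IsCDU Yn)
    (hG : ∀ n, GraphMetricOn (Xn n)) {φ : X → Y} (hφ : CoarseMap φ)
    (hinj : Function.Injective φ) (K : ℕ) :
    ∃ K' : ℕ, ∀ n, K' ≤ n → ∃ m, K ≤ m ∧ ∀ x ∈ Xn n, φ x ∈ Yn m := by
  obtain ⟨s, -, hs⟩ := hφ 2 (by norm_num)
  obtain ⟨k, hk⟩ := hY.exists_sep s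
  obtain ⟨K', hK'⟩ := hX.exists_index_bound
    ((hY.finite_biUnion_lt (max K k)).preimage hinj.injOn)
  refine ⟨K', fun n hn => ?_⟩
  have hlarge : ∀ x ∈ Xn n, ∀ m, φ x ∈ Yn m → max K k ≤ m := by
    intro x hx m hm
    by_contra hlt
    have := hK' n x hx (by
      simp only [Set.mem_preimage, Set.mem_iUnion]
      exact ⟨m, not_le.1 hlt, hm⟩)
    omega
  rcases (Xn n).eq_empty_or_nonempty with he | ⟨x, hx⟩
  · exact ⟨K, le_rfl, by simp [he]⟩
  obtain ⟨m, hm⟩ := (hY.1 (φ x)).exists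
  have hmk := hlarge x hx m hm
  refine ⟨m, (le_max_left _ _).trans hmk, fun y hy => ?_⟩
  obtain ⟨l, c, -, h0, hl, hcS, hc⟩ := hG n x hx y hy
  have : ∀ i ≤ l, φ (c i) ∈ Yn m := by
    intro i
    induction i with
    | zero =>
      intro _
      rwa [h0]
    | succ i ih =>
      intro hi
      obtain ⟨m', hm'⟩ := (hY.1 (φ (c (i + 1)))).exists
      have := hk m m' ((le_max_right _ _).trans hmk) _ (ih (by omega)) _ hm'
        (hs _ _ (by rw [hc i (by omega)]; norm_num))
      rwa [this]
  rw [← hl]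
  exact this l le_rfl

/-! ### Coarse equivalences -/

lemma CoarseMap.of_close {X Y : Type*} [MetricSpace X] [MetricSpace Y] {f g : X → Y}
    (hf : CoarseMap f) (hfg : CloseMaps f g) : CoarseMap g := by
  obtain ⟨C, hC⟩ := hfg
  intro r hr
  obtain ⟨s, hs, h⟩ := hf r hr
  refine ⟨s + 2 * |C|, by positivity, fun x z hxz => ?_⟩
  have h1 := h x z hxz
  have h2 := dist_triangle4 (g x) (f x) (f z) (g z)
  have h3 := hC x
  rw [dist_comm] at h3
  have h4 := hC z
  have := le_abs_self C
  linarith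

lemma CoarseEquivMap.of_close {X Y : Type*} [MetricSpace X] [MetricSpace Y] {f g : X → Y}
    (hf : CoarseEquivMap f) (hfg : CloseMaps f g) : CoarseEquivMap g := by
  obtain ⟨hfc, p, hp, ⟨c₁, h₁⟩, ⟨c₂, h₂⟩⟩ := hf
  refine ⟨hfc.of_close hfg, p, hp, ?_, ?_⟩
  · obtain ⟨C, hC⟩ := hfg
    obtain ⟨s, -, hs⟩ := hp (|C| + 1) (by positivity)
    refine ⟨s + c₁, fun x => ?_⟩
    have h3 := hs (g x) (f x) (by
      have := hC x
      rw [dist_comm] at this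
      have := le_abs_self C
      linarith)
    have h4 := dist_triangle (p (g x)) (p (f x)) x
    have h5 := h₁ x
    simp only [Function.comp, id] at h5 ⊢
    linarith
  · obtain ⟨C, hC⟩ := hfg
    refine ⟨C + c₂, fun y => ?_⟩
    have h3 := hC (p y)
    have h4 := dist_triangle (g (p y)) (f (p y)) y
    have h5 := h₂ y
    rw [dist_comm] at h3
    simp only [Function.comp, id] at h5 ⊢
    linarith

lemma CoarseEquivMap.coarse_symm {X Y : Type*} [MetricSpace X] [MetricSpace Y] (e : X ≃ Y)
    (he : CoarseEquivMap e) : CoarseMap e.symm := by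
  obtain ⟨-, p, hp, ⟨c, hc⟩, -⟩ := he
  refine hp.of_close ⟨c, fun y => ?_⟩
  simpa using hc (e.symm y)

/-! ### From a bijective coarse equivalence to a matching of the pieces -/

lemma pieces_of_bijective {X Y : Type*} [MetricSpace X] [MetricSpace Y]
    {Xn : ℕ → Set X} {Yn : ℕ → Set Y} (hX : IsCDU Xn) (hY : IsCDU Yn)
    (hXe : ExpanderSeq Xn) (hYe : ExpanderSeq Yn) {f : X → Y}
    (g : X ≃ Y) (hg : CoarseEquivMap g) (hfg : CloseMaps f g) :
    ∃ (N M : Set ℕ) (i : ℕ → ℕ), Nᶜ.Finite ∧ Mᶜ.Finite ∧ Set.BijOn i N M ∧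
      (∑ᶠ n ∈ Nᶜ, (Xn n).ncard) = (∑ᶠ n ∈ Mᶜ, (Yn n).ncard) ∧
      ∀ n ∈ N, (Xn n).ncard = (Yn (i n)).ncard ∧ f '' (Xn n) ⊆ Yn (i n) := by
  classical
  obtain ⟨kX, hX', -, hXg, hXt⟩ := hXe
  obtain ⟨kY, hY', -, hYg, hYt⟩ := hYe
  have hgs := CoarseEquivMap.coarse_symm g hg
  obtain ⟨C, hC⟩ := hfg
  let N : Set ℕ := {n | (Xn n).Nonempty ∧ ∃ m, g '' Xn n = Yn m ∧ f '' Xn n ⊆ Yn m}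
  have himage : ∀ n : ℕ, ∃ m, n ∈ N → g '' Xn n = Yn m ∧ f '' Xn n ⊆ Yn m := by
    intro n
    by_cases hn : n ∈ N
    · obtain ⟨m, hm⟩ := hn.2
      exact ⟨m, fun _ => hm⟩
    · exact ⟨0, fun h => absurd h hn⟩
  choose i hi using himage
  have hinj : Set.InjOn i N := by
    intro n hn n' hn' heq
    obtain ⟨x, hx⟩ := hn.1
    have h1 : g x ∈ g '' Xn n' := by
      rw [(hi n' hn').1, ← heq, ← (hi n hn).1]
      exact ⟨x, hx, rfl⟩
    obtain ⟨x', hx', hxx⟩ := h1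
    rw [g.injective hxx] at hx'
    exact hX.index_unique hx hx'
  -- All but finitely many `n` belong to `N`.
  have hNev : ∃ K, ∀ n, K ≤ n → n ∈ N := by
    obtain ⟨kC, hkC⟩ := hY.exists_sep (C + 1)
    obtain ⟨K₂, hK₂⟩ := exists_piece_image hY hX (fun n => (hYg n).1) hgs g.symm.injective 0
    obtain ⟨K₃, hK₃⟩ := exists_piece_image hX hY (fun n => (hXg n).1) hg.1 g.injective
      (max K₂ kC)
    obtain ⟨K₄, hK₄⟩ := Filter.eventually_atTop.1 (hXt.eventually_ge_atTop 1)
    refine ⟨max K₃ K₄, fun n hn => ?_⟩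
    have hne : (Xn n).Nonempty := by
      apply Set.nonempty_of_ncard_ne_zero
      have := hK₄ n ((le_max_right _ _).trans hn)
      omega
    obtain ⟨m, hm, hgm⟩ := hK₃ n ((le_max_left _ _).trans hn)
    obtain ⟨n', -, hn'⟩ := hK₂ m ((le_max_left _ _).trans hm)
    obtain ⟨x₀, hx₀⟩ := hne
    have hnn : n' = n := by
      have := hn' _ (hgm x₀ hx₀)
      rw [g.symm_apply_apply] at this
      exact hX.index_unique this hx₀
    subst hnn
    refine ⟨⟨x₀, hx₀⟩, m, ?_, ?_⟩
    · apply Set.Subset.antisymm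
      · rintro _ ⟨x, hx, rfl⟩
        exact hgm x hx
      · intro y hy
        exact ⟨g.symm y, hn' y hy, g.apply_symm_apply y⟩
    · rintro _ ⟨x, hx, rfl⟩
      obtain ⟨m', hm'⟩ := (hY.1 (f x)).exists
      have hd := hC x
      rw [dist_comm] at hd
      have := hkC m m' ((le_max_right _ _).trans hm) _ (hgm x hx) _ hm' (by linarith)
      rwa [this]
  obtain ⟨K₅, hK₅⟩ := hNev
  -- All but finitely many pieces of `Y` are images of pieces indexed by `N`.
  have hMev : ∃ K, ∀ m, K ≤ m → m ∈ i '' N := by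
    obtain ⟨K₆, hK₆⟩ := exists_piece_image hY hX (fun n => (hYg n).1) hgs g.symm.injective K₅
    obtain ⟨K₇, hK₇⟩ := Filter.eventually_atTop.1 (hYt.eventually_ge_atTop 1)
    refine ⟨max K₆ K₇, fun m hm => ?_⟩
    obtain ⟨y, hy⟩ : (Yn m).Nonempty := by
      apply Set.nonempty_of_ncard_ne_zero
      have := hK₇ m ((le_max_right _ _).trans hm)
      omega
    obtain ⟨n, hn, hn'⟩ := hK₆ m ((le_max_left _ _).trans hm)
    have hnN := hK₅ n hn
    refine ⟨n, hnN, ?_⟩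
    have h1 : y ∈ Yn (i n) := by
      rw [← (hi n hnN).1]
      exact ⟨g.symm y, hn' y hy, g.apply_symm_apply y⟩
    exact hY.index_unique h1 hy
  obtain ⟨K₆, hK₆⟩ := hMev
  have hNf : Nᶜ.Finite := (Set.finite_Iio K₅).subset fun n hn => by
    by_contra h
    exact hn (hK₅ n (not_lt.1 h))
  have hMf : (i '' N)ᶜ.Finite := (Set.finite_Iio K₆).subset fun n hn => by
    by_contra h
    exact hn (hK₆ n (not_lt.1 h))
  refine ⟨N, i '' N, i, hNf, hMf, hinj.bijOn_image, ?_, fun n hn => ⟨?_, (hi n hn).2⟩⟩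
  · rw [← hX.ncard_biUnion hNf, ← hY.ncard_biUnion hMf,
      ← Set.ncard_image_of_injective _ g.injective]
    congr 1
    ext y
    simp only [Set.mem_image, Set.mem_iUnion]
    constructor
    · rintro ⟨x, ⟨n, hn, hx⟩, rfl⟩
      obtain ⟨m, hm⟩ := (hY.1 (g x)).exists
      refine ⟨m, ?_, hm⟩
      rintro ⟨n', hn', rfl⟩
      rw [← (hi n' hn').1] at hm
      obtain ⟨x', hx', hxx⟩ := hm
      rw [g.injective hxx] at hx'
      rw [hX.index_unique hx hx'] at hn
      exact hn hn'
    · rintro ⟨m, hm, hy⟩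
      obtain ⟨n, hn⟩ := (hX.1 (g.symm y)).exists
      refine ⟨g.symm y, ⟨n, ?_, hn⟩, g.apply_symm_apply y⟩
      intro hnN
      apply hm
      refine ⟨n, hnN, ?_⟩
      have h1 : y ∈ Yn (i n) := by
        rw [← (hi n hnN).1]
        exact ⟨g.symm y, hn, g.apply_symm_apply y⟩
      exact hY.index_unique h1 hy
  · rw [← (hi n hn).1, Set.ncard_image_of_injective _ g.injective]

/-! ### From a matching of the pieces to a bijective coarse equivalence -/

lemma exists_bijOn_of_ncard_eq {X Y : Type*} [Nonempty Y] {U : Set X} {V : Set Y}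
    (hU : U.Finite) (hV : V.Finite) (h : U.ncard = V.ncard) : ∃ e : X → Y, Set.BijOn e U V := by
  apply hU.exists_bijOn_of_encard_eq
  rw [← hU.cast_ncard_eq, ← hV.cast_ncard_eq, h]

/-- For all but finitely many matched pieces `f` is uniformly close to a bijection
between them. -/
lemma exists_uniform_bijOn {X Y : Type*} [MetricSpace X] [MetricSpace Y]
    {Xn : ℕ → Set X} {Yn : ℕ → Set Y} (hX : IsCDU Xn) (hY : IsCDU Yn)
    (hXe : ExpanderSeq Xn) (hYe : ExpanderSeq Yn) {f : X → Y} (hf : CoarseEquivMap f)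
    {N : Set ℕ} {i : ℕ → ℕ} (hN : Nᶜ.Finite) (hi : Set.InjOn i N)
    (hNi : ∀ n ∈ N, (Xn n).ncard = (Yn (i n)).ncard ∧ f '' (Xn n) ⊆ Yn (i n)) :
    ∃ (R : ℝ) (F : Set ℕ), F.Finite ∧ ∀ n ∈ N, n ∉ F →
      ∃ e : X → Y, Set.BijOn e (Xn n) (Yn (i n)) ∧ ∀ x ∈ Xn n, dist (f x) (e x) ≤ R := by
  obtain ⟨kX, aX, haX, hXg, -⟩ := hXe
  obtain ⟨kY, aY, haY, hYg, -⟩ := hYe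
  obtain ⟨-, g, -, ⟨c₁, hc₁⟩, ⟨c₂, hc₂⟩⟩ := hf
  have hc₁' : ∀ x, dist (g (f x)) x ≤ c₁ := hc₁
  have hc₂' : ∀ y, dist (f (g y)) y ≤ c₂ := hc₂
  -- Fibres of `f` and `g` have diameter at most `2 c₁` and `2 c₂`.
  obtain ⟨j₁, hj₁⟩ := exists_nat_ge (2 * c₁)
  obtain ⟨j₂, hj₂⟩ := exists_nat_ge (2 * c₂)
  have hfib₁ : ∀ x z, f x = f z → dist x z ≤ j₁ := by
    intro x z h
    have h1 := dist_triangle_left x z (g (f x))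
    have h2 := hc₁' x
    have h3 := hc₁' z
    rw [← h] at h3
    linarith
  have hfib₂ : ∀ x z, g x = g z → dist x z ≤ j₂ := by
    intro x z h
    have h1 := dist_triangle_left x z (f (g x))
    have h2 := hc₂' x
    have h3 := hc₂' z
    rw [← h] at h3
    linarith
  obtain ⟨R₀, hR₀, hgrow₀⟩ := exists_growth_radius (X := Y) kY haY ((kX + 1) ^ j₁) c₂
  obtain ⟨R₁, hR₁, hgrow₁⟩ := exists_growth_radius (X := Y) kY haY ((kY + 1) ^ j₂) 0
  -- Outside finitely many `n`, the coarse inverse `g` maps `Yn (i n)` into `Xn n`.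
  obtain ⟨k, hk⟩ := hY.exists_sep (c₂ + 1)
  obtain ⟨K, hK⟩ := hY.exists_index_bound
    ((hN.biUnion fun n _ => hX.2.1 n).image f)
  refine ⟨R₀ + R₁, N ∩ i ⁻¹' Set.Iio (max k K), ?_, fun n hn hnF => ?_⟩
  · apply Set.Finite.of_finite_image (f := i)
    · exact (Set.finite_Iio (max k K)).subset (by rintro _ ⟨n, hn, rfl⟩; exact hn.2)
    · exact hi.mono Set.inter_subset_left
  have hlarge : max k K ≤ i n := by
    by_contra hlt
    exact hnF ⟨hn, not_le.1 hlt⟩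
  have hgmaps : ∀ y ∈ Yn (i n), g y ∈ Xn n := by
    intro y hy
    obtain ⟨m', hm'⟩ := (hY.1 (f (g y))).exists
    have heq : i n = m' := hk (i n) m' ((le_max_left _ _).trans hlarge) _ hy _ hm' (by
      have := hc₂' y
      rw [dist_comm] at this
      linarith)
    rw [← heq] at hm'
    obtain ⟨n', hn'⟩ := (hX.1 (g y)).exists
    by_cases hnN : n' ∈ N
    · have h1 := (hNi n' hnN).2 ⟨g y, hn', rfl⟩
      rwa [hi hn hnN (hY.index_unique hm' h1)]
    · have := hK (i n) _ hm' ⟨g y, by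
        simp only [Set.mem_iUnion]
        exact ⟨n', hnN, hn'⟩, rfl⟩
      have := (le_max_right k K).trans hlarge
      omega
  refine exists_bijOn_of_hall (hY.2.1 _) (hNi n hn).1 f _ ?_
  exact hall_condition (hX.2.1 n) (hY.2.1 (i n)) (hNi n hn).1 f g
    (fun x hx => (hNi n hn).2 ⟨x, hx, rfl⟩) hgmaps hR₁ (fun y => (hc₂' y).trans hR₀)
    (by positivity)
    (ncard_le_mul_ncard_image (hX.2.1 n) (hXg n).1 kX (hXg n).2.1 j₁ f hfib₁)
    (ncard_le_mul_ncard_image (hY.2.1 (i n)) (hYg (i n)).1 kY (hYg (i n)).2.1 j₂ g hfib₂)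
    (hgrow₀ _ (hY.2.1 _) (hYg _)) (hgrow₁ _ (hY.2.1 _) (hYg _))

/-- The bijection is glued from bijections of the matched pieces, chosen uniformly close to `f`
for all but finitely many of them, and an arbitrary bijection of the finite leftovers. Only
finitely many points are not controlled by the uniform bound, so the result is close to `f`. -/
lemma bijective_of_pieces {X Y : Type*} [MetricSpace X] [MetricSpace Y] [Nonempty Y]
    {Xn : ℕ → Set X} {Yn : ℕ → Set Y} (hX : IsCDU Xn) (hY : IsCDU Yn)
    (hXe : ExpanderSeq Xn) (hYe : ExpanderSeq Yn) {f : X → Y} (hf : CoarseEquivMap f)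
    {N M : Set ℕ} {i : ℕ → ℕ} (hN : Nᶜ.Finite) (hM : Mᶜ.Finite) (hi : Set.BijOn i N M)
    (hsum : (∑ᶠ n ∈ Nᶜ, (Xn n).ncard) = (∑ᶠ n ∈ Mᶜ, (Yn n).ncard))
    (hNi : ∀ n ∈ N, (Xn n).ncard = (Yn (i n)).ncard ∧ f '' (Xn n) ⊆ Yn (i n)) :
    ∃ g : X → Y, Function.Bijective g ∧ CloseMaps f g := by
  classical
  obtain ⟨R, F, hF, hRF⟩ := exists_uniform_bijOn hX hY hXe hYe hf hN hi.injOn hNi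
  have hpiece : ∀ n, ∃ e : X → Y, n ∈ N → Set.BijOn e (Xn n) (Yn (i n)) ∧
      (n ∉ F → ∀ x ∈ Xn n, dist (f x) (e x) ≤ R) := by
    intro n
    by_cases hn : n ∈ N
    · by_cases hnF : n ∈ F
      · obtain ⟨e, he⟩ := exists_bijOn_of_ncard_eq (hX.2.1 n) (hY.2.1 (i n)) (hNi n hn).1
        exact ⟨e, fun _ => ⟨he, fun h => absurd hnF h⟩⟩
      · obtain ⟨e, he, hd⟩ := hRF n hn hnF
        exact ⟨e, fun _ => ⟨he, fun _ => hd⟩⟩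
    · exact ⟨f, fun h => absurd h hn⟩
  choose e he using hpiece
  obtain ⟨e₀, he₀⟩ : ∃ e₀ : X → Y, Set.BijOn e₀ (⋃ n ∈ Nᶜ, Xn n) (⋃ n ∈ Mᶜ, Yn n) := by
    apply exists_bijOn_of_ncard_eq (hN.biUnion fun n _ => hX.2.1 n)
      (hM.biUnion fun n _ => hY.2.1 n)
    rw [hX.ncard_biUnion hN, hY.ncard_biUnion hM, hsum]
  choose idx hidx using fun x => (hX.1 x).exists
  let g : X → Y := fun x => if idx x ∈ N then e (idx x) x else e₀ x
  have hgN : ∀ n ∈ N, ∀ x ∈ Xn n, g x = e n x := by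
    intro n hn x hx
    obtain rfl := hX.index_unique hx (hidx x)
    exact if_pos hn
  have hgN' : ∀ n ∉ N, ∀ x ∈ Xn n, g x = e₀ x := by
    intro n hn x hx
    obtain rfl := hX.index_unique hx (hidx x)
    exact if_neg hn
  have hgM : ∀ n ∈ N, ∀ x ∈ Xn n, g x ∈ Yn (i n) := by
    intro n hn x hx
    rw [hgN n hn x hx]
    exact (he n hn).1.mapsTo hx
  have hU : ∀ n ∉ N, ∀ x ∈ Xn n, x ∈ ⋃ n ∈ Nᶜ, Xn n := by
    intro n hn x hx
    simp only [Set.mem_iUnion]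
    exact ⟨n, hn, hx⟩
  have hgM' : ∀ n ∉ N, ∀ x ∈ Xn n, ∃ m ∉ M, g x ∈ Yn m := by
    intro n hn x hx
    rw [hgN' n hn x hx]
    have := he₀.mapsTo (hU n hn x hx)
    simp only [Set.mem_iUnion] at this
    obtain ⟨m, hm, h⟩ := this
    exact ⟨m, hm, h⟩
  refine ⟨g, ⟨?_, ?_⟩, ?_⟩
  · intro x z hxz
    obtain ⟨n, hx⟩ := (hX.1 x).exists
    obtain ⟨n', hz⟩ := (hX.1 z).exists
    by_cases hn : n ∈ N <;> by_cases hn' : n' ∈ N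
    · have h1 := hgM n hn x hx
      have h2 := hgM n' hn' z hz
      rw [← hxz] at h2
      obtain rfl := hi.injOn hn hn' (hY.index_unique h1 h2)
      rw [hgN n hn x hx, hgN n hn z hz] at hxz
      exact (he n hn).1.injOn hx hz hxz
    · obtain ⟨m, hm, h⟩ := hgM' n' hn' z hz
      rw [← hxz] at h
      exact absurd (hY.index_unique h (hgM n hn x hx) ▸ hi.mapsTo hn) hm
    · obtain ⟨m, hm, h⟩ := hgM' n hn x hx
      rw [hxz] at h
      exact absurd (hY.index_unique h (hgM n' hn' z hz) ▸ hi.mapsTo hn') hm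
    · rw [hgN' n hn x hx, hgN' n' hn' z hz] at hxz
      exact he₀.injOn (hU n hn x hx) (hU n' hn' z hz) hxz
  · intro y
    obtain ⟨m, hy⟩ := (hY.1 y).exists
    by_cases hm : m ∈ M
    · obtain ⟨n, hn, rfl⟩ := hi.surjOn hm
      obtain ⟨x, hx, rfl⟩ := (he n hn).1.surjOn hy
      exact ⟨x, hgN n hn x hx⟩
    · have : y ∈ ⋃ n ∈ Mᶜ, Yn n := by
        simp only [Set.mem_iUnion]
        exact ⟨m, hm, hy⟩
      obtain ⟨x, hx, rfl⟩ := he₀.surjOn this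
      simp only [Set.mem_iUnion] at hx
      obtain ⟨n, hn, hx⟩ := hx
      exact ⟨x, hgN' n hn x hx⟩
  · have hfin : (⋃ n ∈ Nᶜ ∪ F, Xn n).Finite := (hN.union hF).biUnion fun n _ => hX.2.1 n
    obtain ⟨B, hB⟩ := (hfin.image fun x => dist (f x) (g x)).bddAbove
    refine ⟨max R B, fun x => ?_⟩
    obtain ⟨n, hx⟩ := (hX.1 x).exists
    by_cases hn : n ∈ Nᶜ ∪ F
    · refine le_max_of_le_right (hB ⟨x, ?_, rfl⟩)
      simp only [Set.mem_iUnion]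
      exact ⟨n, hn, hx⟩
    · have hnN : n ∈ N := by
        by_contra h
        exact hn (Or.inl h)
      apply le_max_of_le_left
      rw [hgN n hnN x hx]
      exact (he n hnN).2 (fun h => hn (Or.inr h)) x hx

/-- For coarse disjoint unions of expander graphs `X = ⊔ₙ Xₙ`,
`Y = ⊔ₙ Yₙ` and a coarse equivalence `f : X → Y`, `f` is close to a bijective coarse
equivalence iff there are cofinite `N, M ⊆ ℕ` and a bijection `i : N → M` with
`∑_{n ∉ N} |Xₙ| = ∑_{n ∉ M} |Yₙ|`, and `|Xₙ| = |Y_{i n}|`, `f(Xₙ) ⊆ Y_{i n}` for `n ∈ N`. -/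
theorem stmt1 {X Y : Type*} [MetricSpace X] [MetricSpace Y]
    (Xn : ℕ → Set X) (Yn : ℕ → Set Y)
    (hX : IsCDU Xn) (hY : IsCDU Yn)
    (hXe : ExpanderSeq Xn) (hYe : ExpanderSeq Yn)
    (f : X → Y) (hf : CoarseEquivMap f) :
    (∃ g : X → Y, Function.Bijective g ∧ CoarseEquivMap g ∧ CloseMaps f g) ↔
    (∃ (N M : Set ℕ) (i : ℕ → ℕ), Nᶜ.Finite ∧ Mᶜ.Finite ∧ Set.BijOn i N M ∧
      (∑ᶠ n ∈ Nᶜ, (Xn n).ncard) = (∑ᶠ n ∈ Mᶜ, (Yn n).ncard) ∧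
      ∀ n ∈ N, (Xn n).ncard = (Yn (i n)).ncard ∧ f '' (Xn n) ⊆ Yn (i n)) := by
  constructor
  · rintro ⟨g, hbij, hg, hfg⟩
    exact pieces_of_bijective hX hY hXe hYe (Equiv.ofBijective g hbij) hg hfg
  · rintro ⟨N, M, i, hN, hM, hi, hsum, hNi⟩
    have hYne : Nonempty Y := by
      obtain ⟨-, -, -, -, ht⟩ := hYe
      obtain ⟨n, hn⟩ := (ht.eventually_ge_atTop 1).exists
      obtain ⟨y, -⟩ := Set.nonempty_of_ncard_ne_zero (s := Yn n) (by omega)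
      exact ⟨y⟩
    obtain ⟨g, hbij, hfg⟩ := bijective_of_pieces hX hY hXe hYe hf hN hM hi hsum hNi
    exact ⟨g, hbij, hf.of_close hfg, hfg⟩
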